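/- Let p be an odd prime and let D be an integer that is not a perfect square, and suppose there exists α₀ ∈ ℚ_p with α₀² = D and ‖α₀‖_p < 1. Let (α_n), (b_n) be the sequences produced by Algorithm (3) applied to α₀, and assume the expansion is periodic. Then b_0 = 0 and the pre-period has length exactly 2: there exists k ≥ 1 with b_{n+k} = b_n for all n ≥ 2, but there is no k ≥ 1 with b_{n+k} = b_n for all n ≥ 1. -/

import Mathlib

/-- A rational number `a` is a `p`-adic fraction if `a * p^m` is an integer
for some natural number `m`, i.e. `a ∈ ℤ[1/p]`. -/
def IsPadicFrac (p : ℕ) (a : ℚ) : Prop := ∃ (m : ℕ) (z : ℤ), a * (p : ℚ) ^ m = (z : ℚ)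

/-- `b` is Browkin's integral floor `s α`: the unique `p`-adic fraction with
`|b| < p/2` and `‖α - b‖_p < 1`. -/
def IsIntFloor (p : ℕ) [Fact p.Prime] (α : ℚ_[p]) (b : ℚ) : Prop :=
  IsPadicFrac p b ∧ |b| < (p : ℚ) / 2 ∧ ‖α - (b : ℚ_[p])‖ < 1

/-- `b` is Browkin's fractional floor `t α`: the unique `p`-adic fraction with
`|b| < 1/2` and `‖α - b‖_p ≤ 1`. -/
def IsFracFloor (p : ℕ) [Fact p.Prime] (α : ℚ_[p]) (b : ℚ) : Prop :=
  IsPadicFrac p b ∧ |b| < 1 / 2 ∧ ‖α - (b : ℚ_[p])‖ ≤ 1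

/-- Algorithm (3): `b n = s (α n)` for even `n`, `b n = t (α n)` for odd `n`,
and `α (n + 1) = (α n - b n)⁻¹`. -/
def Alg3 (p : ℕ) [Fact p.Prime] (α : ℕ → ℚ_[p]) (b : ℕ → ℚ) : Prop :=
  (∀ n, Even n → IsIntFloor p (α n) (b n)) ∧
  (∀ n, Odd n → IsFracFloor p (α n) (b n)) ∧
  ∀ n, α (n + 1) = (α n - (b n : ℚ_[p]))⁻¹

/-!
Galois' argument for pure periodicity, transported to `ℚ_p`. Let `β n` be the conjugate of
`α n` in `ℚ(√D)`. From index `2` on, `β n` is as small as the remainders of the floor function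
used at step `n`, so `β (n + 1)⁻¹ = β n - b n` shows that `-b n` is that floor of
`β (n + 1)⁻¹`. Hence `α (n + 1)` determines `b n` and `α n`, and a period propagates backwards
down to index `2`. It cannot reach index `1`: there `β 1 = -α 1` has norm greater than `1`,
whereas `‖β n‖ ≤ 1` for `n ≥ 2`.
-/

section Floors

variable {p : ℕ}

theorem IsPadicFrac.neg {a : ℚ} (ha : IsPadicFrac p a) : IsPadicFrac p (-a) := by
  obtain ⟨m, z, hz⟩ := ha
  exact ⟨m, -z, by rw [neg_mul, hz, Int.cast_neg]⟩

theorem IsPadicFrac.sub {a b : ℚ} (ha : IsPadicFrac p a) (hb : IsPadicFrac p b) :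
    IsPadicFrac p (a - b) := by
  obtain ⟨m, z, hz⟩ := ha
  obtain ⟨n, w, hw⟩ := hb
  refine ⟨m + n, z * p ^ n - w * p ^ m, ?_⟩
  push_cast
  rw [← hz, ← hw]
  ring

variable [Fact p.Prime]

theorem IsPadicFrac.exists_eq_intCast {c : ℚ} (hc : IsPadicFrac p c) (hnorm : ‖(c : ℚ_[p])‖ ≤ 1) :
    ∃ z : ℤ, c = z := by
  obtain ⟨m, z, hz⟩ := hc
  have hz_cast : (z : ℚ_[p]) = c * (p : ℚ_[p]) ^ m := by exact_mod_cast congrArg Rat.cast hz.symm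
  have hz_norm : ‖(z : ℚ_[p])‖ ≤ (p : ℝ) ^ (-m : ℤ) := by
    rw [hz_cast, norm_mul, Padic.norm_p_pow]
    exact mul_le_of_le_one_left (by positivity) hnorm
  obtain ⟨w, rfl⟩ := (Padic.norm_int_le_pow_iff_dvd z m).1 hz_norm
  have hp : (p : ℚ) ^ m ≠ 0 := pow_ne_zero _ (mod_cast (Fact.out : p.Prime).ne_zero)
  refine ⟨w, mul_right_cancel₀ hp ?_⟩
  rw [hz, Int.cast_mul, mul_comm]
  push_cast
  rfl

theorem IsPadicFrac.eq_zero_of_norm_le_one {c : ℚ} (hc : IsPadicFrac p c)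
    (hnorm : ‖(c : ℚ_[p])‖ ≤ 1) (habs : |c| < 1) : c = 0 := by
  obtain ⟨z, rfl⟩ := hc.exists_eq_intCast hnorm
  exact_mod_cast Int.abs_lt_one_iff.1 (mod_cast habs)

theorem IsPadicFrac.eq_zero_of_norm_lt_one {c : ℚ} (hc : IsPadicFrac p c)
    (hnorm : ‖(c : ℚ_[p])‖ < 1) (habs : |c| < p) : c = 0 := by
  obtain ⟨z, rfl⟩ := hc.exists_eq_intCast hnorm.le
  have hdvd : (p : ℤ) ∣ z := Padic.norm_intCast_lt_one_iff.1 (by simpa using hnorm)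
  exact_mod_cast Int.eq_zero_of_abs_lt_dvd hdvd (mod_cast habs)

variable {x y : ℚ_[p]} {a b : ℚ}

theorem IsIntFloor.unique (ha : IsIntFloor p x a) (hb : IsIntFloor p x b) : a = b := by
  refine sub_eq_zero.1 ((ha.1.sub hb.1).eq_zero_of_norm_lt_one (p := p) ?_ ?_)
  · rw [Rat.cast_sub, ← dist_eq_norm]
    refine (dist_triangle_max _ x _).trans_lt (max_lt ?_ ?_)
    · rw [dist_comm, dist_eq_norm]
      exact ha.2.2
    · rw [dist_eq_norm]
      exact hb.2.2
  · linarith [abs_sub a b, ha.2.1, hb.2.1]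

theorem IsFracFloor.unique (ha : IsFracFloor p x a) (hb : IsFracFloor p x b) : a = b := by
  refine sub_eq_zero.1 ((ha.1.sub hb.1).eq_zero_of_norm_le_one (p := p) ?_ ?_)
  · rw [Rat.cast_sub, ← dist_eq_norm]
    refine (dist_triangle_max _ x _).trans (max_le ?_ ?_)
    · rw [dist_comm, dist_eq_norm]
      exact ha.2.2
    · rw [dist_eq_norm]
      exact hb.2.2
  · linarith [abs_sub a b, ha.2.1, hb.2.1]

theorem isIntFloor_zero (hx : ‖x‖ < 1) : IsIntFloor p x 0 := by
  have hp : (0 : ℚ) < p := mod_cast (Fact.out : p.Prime).pos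
  exact ⟨⟨0, 0, by simp⟩, by simpa using hp, by simpa using hx⟩

theorem IsIntFloor.neg_of_norm_lt_one (hb : IsIntFloor p x b) (hy : ‖y‖ < 1) :
    IsIntFloor p (y - b) (-b) :=
  ⟨hb.1.neg, by simpa using hb.2.1, by simpa using hy⟩

theorem IsFracFloor.neg_of_norm_le_one (hb : IsFracFloor p x b) (hy : ‖y‖ ≤ 1) :
    IsFracFloor p (y - b) (-b) :=
  ⟨hb.1.neg, by simpa using hb.2.1, by simpa using hy⟩

-- `|2 * b| < 1`, so if `2 * b` were `p`-integral it would be an integer, hence zero.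
theorem IsFracFloor.one_lt_norm_two_mul (hb : IsFracFloor p x b) (hx : 1 < ‖x‖) :
    1 < ‖2 * (b : ℚ_[p])‖ := by
  by_contra! hle
  have htwo : b - -b = 0 := by
    refine (hb.1.sub hb.1.neg).eq_zero_of_norm_le_one (p := p) ?_ ?_
    · rwa [sub_neg_eq_add, ← two_mul, Rat.cast_mul, Rat.cast_ofNat]
    · linarith [abs_sub b (-b), abs_neg b, hb.2.1]
  obtain rfl : b = 0 := by linarith
  exact hx.not_ge (by simpa using hb.2.2)

end Floors

section CompleteQuotients

/-- `α` is the sequence of complete quotients of a nonterminating continued fraction with partial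
quotients `b`. The product form of `α (n + 1) = (α n - b n)⁻¹` also encodes `α n ≠ b n`. -/
def IsCompleteQuotientSeq {K : Type*} [DivisionRing K] (b : ℕ → ℚ) (α : ℕ → K) : Prop :=
  ∀ n, (α n - b n) * α (n + 1) = 1

theorem ne_ratCast_of_sq_eq {K : Type*} [DivisionRing K] [CharZero K] {D : ℚ} (hD : ¬ IsSquare D)
    {x : K} (hx : x ^ 2 = D) (r : ℚ) : x ≠ r := by
  rintro rfl
  exact hD ⟨r, by rw [← sq]; exact_mod_cast hx.symm⟩

theorem exists_algHom_omega_eq {R A : Type*} [CommRing R] [Ring A] [Algebra R A] {D : R} {x : A}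
    (hx : x ^ 2 = algebraMap R A D) :
    ∃ φ : QuadraticAlgebra R D 0 →ₐ[R] A, φ QuadraticAlgebra.omega = x :=
  ⟨QuadraticAlgebra.lift ⟨x, by rw [← sq, hx, zero_smul, add_zero, Algebra.algebraMap_eq_smul_one]⟩,
    by simp [QuadraticAlgebra.lift]⟩

namespace IsCompleteQuotientSeq

section DivisionRing

variable {K : Type*} [DivisionRing K] {b : ℕ → ℚ} {α : ℕ → K}

theorem of_ne_ratCast [CharZero K] (hα : ∀ n, α (n + 1) = (α n - b n)⁻¹) (hirr : ∀ r : ℚ, α 0 ≠ r) :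
    IsCompleteQuotientSeq b α := by
  have hne : ∀ n (r : ℚ), α n ≠ r := by
    intro n
    induction n with
    | zero => exact hirr
    | succ n ih =>
      intro r hr
      refine ih (r⁻¹ + b n) ?_
      rw [Rat.cast_add, Rat.cast_inv, ← hr, hα, inv_inv, sub_add_cancel]
  intro n
  rw [hα, mul_inv_cancel₀ (sub_ne_zero.2 (hne n _))]

theorem apply_succ (hα : IsCompleteQuotientSeq b α) (n : ℕ) : α (n + 1) = (α n - b n)⁻¹ :=
  eq_inv_of_mul_eq_one_right (hα n)

theorem shift (hα : IsCompleteQuotientSeq b α) (m : ℕ) :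
    IsCompleteQuotientSeq (fun n => b (m + n)) fun n => α (m + n) :=
  fun n => hα (m + n)

end DivisionRing

section Field

variable {K : Type*} [Field K] {b : ℕ → ℚ} {α β : ℕ → K}

theorem sub_eq_mul (hα : IsCompleteQuotientSeq b α) (hβ : IsCompleteQuotientSeq b β) (n : ℕ) :
    α n - β n = (α n - b n) * (β n - b n) * (β (n + 1) - α (n + 1)) := by
  linear_combination (b n - α n) * hβ n + (β n - b n) * hα n

theorem exists_conj [CharZero K] (hα : IsCompleteQuotientSeq b α) {D : ℚ} (hD : ¬ IsSquare D)
    (hsq : α 0 ^ 2 = D) :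
    ∃ β : ℕ → K, IsCompleteQuotientSeq b β ∧ β 0 = -α 0 ∧ ∀ m n, α m = α n → β m = β n := by
  have : Fact (∀ r : ℚ, r ^ 2 ≠ D + 0 * r) := ⟨fun r hr => hD ⟨r, by linear_combination -hr⟩⟩
  obtain ⟨φ, hφ⟩ := exists_algHom_omega_eq (R := ℚ) (hsq.trans (eq_ratCast _ D).symm)
  obtain ⟨ψ, hψ⟩ := exists_algHom_omega_eq (R := ℚ) (x := -α 0) (by rw [neg_sq, hsq, eq_ratCast])
  have hφ_inj : Function.Injective φ := φ.toRingHom.injective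
  have hlift : ∀ n, ∃ z, φ z = α n := by
    intro n
    induction n with
    | zero => exact ⟨_, hφ⟩
    | succ n ih =>
      obtain ⟨z, hz⟩ := ih
      exact ⟨(z - b n)⁻¹, by rw [map_inv₀, map_sub, map_ratCast, hz, hα.apply_succ]⟩
  choose γ hγ using hlift
  have hγ_seq : IsCompleteQuotientSeq b γ := fun n =>
    hφ_inj (by rw [map_mul, map_sub, map_ratCast, hγ, hγ, hα n, map_one])
  have hγ_zero : γ 0 = QuadraticAlgebra.omega := hφ_inj (by rw [hγ, hφ])
  refine ⟨fun n => ψ (γ n), fun n => ?_, (congrArg ψ hγ_zero).trans hψ, fun m n hmn => ?_⟩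
  · rw [← map_ratCast ψ, ← map_sub, ← map_mul, hγ_seq n, map_one]
  · exact congrArg ψ (hφ_inj (by rw [hγ, hγ, hmn]))

end Field

section NormedField

variable {K : Type*} [NormedField K] {b : ℕ → ℚ} {α β : ℕ → K}

-- Two steps shrink the distance between `α` and `β` by a factor `r`, and it never exceeds `2`.
theorem apply_zero_eq_of_norm_mul_le (hα : IsCompleteQuotientSeq b α)
    (hβ : IsCompleteQuotientSeq b β) (hα_le : ∀ n, ‖α n - b n‖ ≤ 1) (hβ_le : ∀ n, ‖β n - b n‖ ≤ 1)
    {r : ℝ} (hr : r < 1) (hmul : ∀ n, ‖α n - b n‖ * ‖α (n + 1) - b (n + 1)‖ ≤ r) :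
    α 0 = β 0 := by
  have hr_nonneg : 0 ≤ r := le_trans (by positivity) (hmul 0)
  have hstep (n : ℕ) : ‖α n - β n‖ ≤ ‖α n - b n‖ * ‖α (n + 1) - β (n + 1)‖ := by
    rw [hα.sub_eq_mul hβ, norm_mul, norm_mul, norm_sub_rev (β (n + 1))]
    gcongr
    exact mul_le_of_le_one_right (norm_nonneg _) (hβ_le n)
  have htwo_steps (n : ℕ) : ‖α n - β n‖ ≤ r * ‖α (n + 2) - β (n + 2)‖ :=
    calc ‖α n - β n‖ ≤ ‖α n - b n‖ * (‖α (n + 1) - b (n + 1)‖ * ‖α (n + 2) - β (n + 2)‖) :=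
          (hstep n).trans (by gcongr; exact hstep (n + 1))
      _ ≤ r * ‖α (n + 2) - β (n + 2)‖ := by
          rw [← mul_assoc]
          gcongr
          exact hmul n
  have hbound (n : ℕ) : ‖α n - β n‖ ≤ 2 := by
    rw [← sub_sub_sub_cancel_right (α n) (β n) (b n)]
    linarith [norm_sub_le (α n - b n) (β n - b n), hα_le n, hβ_le n]
  have hpow (j : ℕ) : ∀ n, ‖α n - β n‖ ≤ r ^ j * 2 := by
    induction j with
    | zero => simpa using hbound
    | succ j ih =>
      intro n
      rw [pow_succ', mul_assoc]
      exact (htwo_steps n).trans (by gcongr; exact ih (n + 2))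
  have hlim : Filter.Tendsto (fun j : ℕ => r ^ j * 2) Filter.atTop (nhds 0) := by
    simpa using (tendsto_pow_atTop_nhds_zero_of_lt_one hr_nonneg hr).mul_const 2
  exact sub_eq_zero.1 (norm_le_zero_iff.1 (ge_of_tendsto' hlim fun j => hpow j 0))

theorem norm_succ_of_norm_lt [IsUltrametricDist K] (hβ : IsCompleteQuotientSeq b β) {n : ℕ}
    (h : ‖β n‖ < ‖(b n : K)‖) : ‖β (n + 1)‖ = ‖(b n : K)‖⁻¹ := by
  rw [hβ.apply_succ, norm_inv, sub_eq_add_neg,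
    IsUltrametricDist.norm_add_eq_max_of_norm_ne_norm (by simpa using h.ne), norm_neg,
    max_eq_right h.le]

end NormedField

end IsCompleteQuotientSeq

end CompleteQuotients

section Remainders

variable {p : ℕ} [Fact p.Prime]

/-- `x` lies in the set of possible remainders of the floor function used at step `n` of
Algorithm (3): the open unit ball for `s` (`n` even), the closed unit ball for `t` (`n` odd). -/
def IsRemainder (n : ℕ) (x : ℚ_[p]) : Prop :=
  ‖x‖ ≤ 1 ∧ (Even n → ‖x‖ < 1)

namespace Alg3

variable {α β : ℕ → ℚ_[p]} {b : ℕ → ℚ}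

theorem isRemainder_sub (h : Alg3 p α b) (n : ℕ) : IsRemainder n (α n - (b n : ℚ_[p])) := by
  rcases n.even_or_odd with hn | hn
  · exact ⟨(h.1 n hn).2.2.le, fun _ => (h.1 n hn).2.2⟩
  · exact ⟨(h.2.1 n hn).2.2, fun hn' => absurd hn' (Nat.not_even_iff_odd.2 hn)⟩

-- `-b m` and `-b n` are floors of the same kind of the same number.
theorem partialQuotient_eq_of_sub_eq (h : Alg3 p α b) {m n : ℕ} {x y : ℚ_[p]}
    (hmn : Even m ↔ Even n) (hx : IsRemainder m x) (hy : IsRemainder n y)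
    (hxy : x - b m = y - b n) : b m = b n := by
  rw [← neg_inj]
  rcases m.even_or_odd with hm | hm
  · have hn := hmn.1 hm
    exact ((h.1 m hm).neg_of_norm_lt_one (hx.2 hm)).unique
      (hxy ▸ (h.1 n hn).neg_of_norm_lt_one (hy.2 hn))
  · have hn : Odd n := by rwa [← Nat.not_even_iff_odd, ← hmn, Nat.not_even_iff_odd]
    exact ((h.2.1 m hm).neg_of_norm_le_one hx.1).unique
      (hxy ▸ (h.2.1 n hn).neg_of_norm_le_one hy.1)

theorem partialQuotient_zero (h : Alg3 p α b) (hα₀ : ‖α 0‖ < 1) : b 0 = 0 :=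
  (h.1 0 Even.zero).unique (isIntFloor_zero hα₀)

theorem norm_sub_mul_norm_sub_succ_le (h : Alg3 p α b) (n : ℕ) :
    ‖α n - b n‖ * ‖α (n + 1) - b (n + 1)‖ ≤ (p : ℝ)⁻¹ := by
  have heven (m : ℕ) (hm : Even m) : ‖α m - b m‖ ≤ (p : ℝ)⁻¹ := by
    simpa using (Padic.norm_lt_pow_iff_norm_le_pow_sub_one _ 0).1
      (by simpa using (h.isRemainder_sub m).2 hm)
  rcases n.even_or_odd with hn | hn
  · exact (mul_le_of_le_one_right (norm_nonneg _) (h.isRemainder_sub _).1).trans (heven n hn)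
  · exact (mul_le_of_le_one_left (norm_nonneg _) (h.isRemainder_sub _).1).trans
      (heven (n + 1) hn.add_one)

theorem apply_add_period (h : Alg3 p α b) (hα : IsCompleteQuotientSeq b α) {m k : ℕ}
    (hb : ∀ n, m ≤ n → b (n + k) = b n) {n : ℕ} (hn : m ≤ n) : α (n + k) = α n := by
  have hb_shift (i : ℕ) : b (n + k + i) = b (n + i) := by rw [add_right_comm, hb _ (by omega)]
  have hp : (p : ℝ)⁻¹ < 1 := inv_lt_one_of_one_lt₀ (mod_cast (Fact.out : p.Prime).one_lt)
  have hα_period : IsCompleteQuotientSeq (fun i => b (n + i)) fun i => α (n + k + i) := by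
    simpa only [hb_shift] using hα.shift (n + k)
  exact ((hα.shift n).apply_zero_eq_of_norm_mul_le hα_period
    (fun i => (h.isRemainder_sub (n + i)).1)
    (fun i => hb_shift i ▸ (h.isRemainder_sub (n + k + i)).1) hp
    fun i => h.norm_sub_mul_norm_sub_succ_le (n + i)).symm

theorem one_le_norm (h : Alg3 p α b) (hα : IsCompleteQuotientSeq b α) {n : ℕ} (hn : 1 ≤ n) :
    1 ≤ ‖α n‖ := by
  obtain ⟨m, rfl⟩ := Nat.exists_eq_add_of_le' hn
  rw [hα.apply_succ, norm_inv]
  exact (one_le_inv₀ (norm_pos_iff.2 (left_ne_zero_of_mul_eq_one (hα m)))).2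
    (h.isRemainder_sub m).1

theorem one_lt_norm_of_odd (h : Alg3 p α b) (hα : IsCompleteQuotientSeq b α) {n : ℕ}
    (hn : Odd n) : 1 < ‖α n‖ := by
  obtain ⟨m, rfl⟩ := hn
  rw [hα.apply_succ, norm_inv]
  exact (one_lt_inv₀ (norm_pos_iff.2 (left_ne_zero_of_mul_eq_one (hα _)))).2
    ((h.isRemainder_sub _).2 (even_two_mul m))

theorem norm_partialQuotient (h : Alg3 p α b) (hα : IsCompleteQuotientSeq b α) {n : ℕ}
    (hn : 1 ≤ n) : ‖(b n : ℚ_[p])‖ = ‖α n‖ := by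
  refine (Padic.norm_eq_of_norm_sub_lt_left ?_).symm
  rcases n.even_or_odd with heven | hodd
  · exact ((h.isRemainder_sub n).2 heven).trans_le (h.one_le_norm hα hn)
  · exact (h.isRemainder_sub n).1.trans_lt (h.one_lt_norm_of_odd hα hodd)

theorem conj_one (h : Alg3 p α b) (hα : IsCompleteQuotientSeq b α)
    (hβ : IsCompleteQuotientSeq b β) (hα₀ : ‖α 0‖ < 1) (hβ₀ : β 0 = -α 0) : β 1 = -α 1 := by
  rw [hβ.apply_succ, hα.apply_succ, h.partialQuotient_zero hα₀, hβ₀, Rat.cast_zero, sub_zero,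
    sub_zero, inv_neg]

theorem norm_conj_two_lt_one (h : Alg3 p α b) (hα : IsCompleteQuotientSeq b α)
    (hβ : IsCompleteQuotientSeq b β) (hβ₁ : β 1 = -α 1) : ‖β 2‖ < 1 := by
  have htwo := (h.2.1 1 odd_one).one_lt_norm_two_mul (h.one_lt_norm_of_odd hα odd_one)
  have hnorm : ‖2 * (b 1 : ℚ_[p])‖ = ‖α 1 + b 1‖ := by
    refine Padic.norm_eq_of_norm_sub_lt_left ?_
    rw [show 2 * (b 1 : ℚ_[p]) - (α 1 + b 1) = -(α 1 - b 1) by ring, norm_neg]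
    exact (h.isRemainder_sub 1).1.trans_lt htwo
  rw [hβ.apply_succ, norm_inv, hβ₁, ← neg_add', norm_neg, ← hnorm]
  exact inv_lt_one_of_one_lt₀ htwo

theorem isRemainder_conj (h : Alg3 p α b) (hα : IsCompleteQuotientSeq b α)
    (hβ : IsCompleteQuotientSeq b β) (hβ₁ : β 1 = -α 1) {n : ℕ} (hn : 2 ≤ n) :
    IsRemainder n (β n) := by
  induction n, hn using Nat.le_induction with
  | base =>
    have hβ₂ := h.norm_conj_two_lt_one hα hβ hβ₁
    exact ⟨hβ₂.le, fun _ => hβ₂⟩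
  | succ n hn ih =>
    have hb := h.norm_partialQuotient hα (by omega : 1 ≤ n)
    rcases n.even_or_odd with heven | hodd
    · have hb_ge : 1 ≤ ‖(b n : ℚ_[p])‖ := hb ▸ h.one_le_norm hα (by omega)
      have hnorm := hβ.norm_succ_of_norm_lt ((ih.2 heven).trans_le hb_ge)
      exact ⟨hnorm ▸ inv_le_one_of_one_le₀ hb_ge,
        fun hsucc => absurd heven (Nat.even_add_one.1 hsucc)⟩
    · have hb_gt : 1 < ‖(b n : ℚ_[p])‖ := hb ▸ h.one_lt_norm_of_odd hα hodd
      have hlt : ‖β (n + 1)‖ < 1 :=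
        hβ.norm_succ_of_norm_lt (ih.1.trans_lt hb_gt) ▸ inv_lt_one_of_one_lt₀ hb_gt
      exact ⟨hlt.le, fun _ => hlt⟩

theorem eq_of_apply_succ_eq (h : Alg3 p α b) (hα : IsCompleteQuotientSeq b α)
    (hβ : IsCompleteQuotientSeq b β) (hβ_rem : ∀ n, 2 ≤ n → IsRemainder n (β n))
    (hconj : ∀ m n, α m = α n → β m = β n) {m n : ℕ} (hm : 2 ≤ m) (hn : 2 ≤ n)
    (hmn : Even m ↔ Even n) (hsucc : α (m + 1) = α (n + 1)) : α m = α n ∧ b m = b n := by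
  have hβ_sub : β m - b m = β n - b n := by
    rw [← inv_inj, ← hβ.apply_succ, ← hβ.apply_succ, hconj _ _ hsucc]
  have hb := h.partialQuotient_eq_of_sub_eq hmn (hβ_rem m hm) (hβ_rem n hn) hβ_sub
  rw [hα.apply_succ, hα.apply_succ, inv_inj, hb] at hsucc
  exact ⟨sub_left_injective hsucc, hb⟩

theorem partialQuotient_add_period (h : Alg3 p α b) (hα : IsCompleteQuotientSeq b α)
    (hβ : IsCompleteQuotientSeq b β) (hβ_rem : ∀ n, 2 ≤ n → IsRemainder n (β n))
    (hconj : ∀ m n, α m = α n → β m = β n) {m k : ℕ} (hk : Even k)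
    (hper : ∀ n, m ≤ n → α (n + k) = α n) {n : ℕ} (hn : 2 ≤ n) : b (n + k) = b n := by
  have hback (i : ℕ) (hi : 2 ≤ i) (hα_succ : α (i + 1 + k) = α (i + 1)) :
      α (i + k) = α i ∧ b (i + k) = b i :=
    h.eq_of_apply_succ_eq hα hβ hβ_rem hconj (by omega) hi (by simp [Nat.even_add, hk])
      (by rwa [add_right_comm])
  have hα_succ : α (n + 1 + k) = α (n + 1) :=
    Nat.decreasingInduction' (P := fun i => α (i + k) = α i)
      (fun i _ hi hi_succ => (hback i (by omega) hi_succ).1)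
      (le_max_left (n + 1) m) (hper _ (le_max_right _ _))
  exact (hback n hn hα_succ).2

end Alg3

end Remainders

theorem stmt_10_general {p : ℕ} [Fact p.Prime] {D : ℚ} (hD : ¬ IsSquare D) {α : ℕ → ℚ_[p]}
    {b : ℕ → ℚ} (hsq : α 0 ^ 2 = (D : ℚ_[p])) (hval : ‖α 0‖ < 1) (halg : Alg3 p α b)
    (hper : ∃ h k : ℕ, 1 ≤ k ∧ ∀ n, h ≤ n → b (n + k) = b n) :
    b 0 = 0 ∧
      (∃ k : ℕ, 1 ≤ k ∧ ∀ n, 2 ≤ n → b (n + k) = b n) ∧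
      ¬ ∃ k : ℕ, 1 ≤ k ∧ ∀ n, 1 ≤ n → b (n + k) = b n := by
  have hα := IsCompleteQuotientSeq.of_ne_ratCast halg.2.2 (ne_ratCast_of_sq_eq hD hsq)
  obtain ⟨β, hβ, hβ₀, hconj⟩ := hα.exists_conj hD hsq
  have hβ₁ := halg.conj_one hα hβ hval hβ₀
  have hβ_rem (n : ℕ) (hn : 2 ≤ n) := halg.isRemainder_conj hα hβ hβ₁ hn
  refine ⟨halg.partialQuotient_zero hval, ?_, ?_⟩
  · obtain ⟨h, k, hk, hb⟩ := hper
    have hα_per (n : ℕ) (hn : h ≤ n) : α (n + (k + k)) = α n := by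
      rw [← add_assoc, halg.apply_add_period hα hb (by omega), halg.apply_add_period hα hb hn]
    exact ⟨k + k, by omega, fun n hn =>
      halg.partialQuotient_add_period hα hβ hβ_rem hconj (Even.add_self k) hα_per hn⟩
  · rintro ⟨k, hk, hb⟩
    have hβ_per : β (1 + k) = -α 1 := (hconj _ _ (halg.apply_add_period hα hb le_rfl)).trans hβ₁
    have hle : ‖α 1‖ ≤ 1 := by simpa [hβ_per] using (hβ_rem (1 + k) (by omega)).1
    exact hle.not_gt (halg.one_lt_norm_of_odd hα odd_one)

/-- If `D` is a nonsquare integer, `α₀² = D` in `ℚ_p` with `‖α₀‖_p < 1`, and the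
Algorithm (3) expansion of `α₀` is periodic, then `b 0 = 0` and the pre-period
has length exactly `2`. -/
theorem stmt_10 (p : ℕ) [Fact p.Prime] (hp : p ≠ 2) (D : ℤ)
    (hD : ¬ ∃ z : ℤ, z * z = D)
    (α₀ : ℚ_[p]) (hsq : α₀ ^ 2 = (D : ℚ_[p])) (hval : ‖α₀‖ < 1)
    (α : ℕ → ℚ_[p]) (b : ℕ → ℚ) (h0 : α 0 = α₀) (halg : Alg3 p α b)
    (hper : ∃ h k : ℕ, 1 ≤ k ∧ ∀ n, h ≤ n → b (n + k) = b n) :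
    b 0 = 0 ∧
      (∃ k : ℕ, 1 ≤ k ∧ ∀ n, 2 ≤ n → b (n + k) = b n) ∧
      ¬ ∃ k : ℕ, 1 ≤ k ∧ ∀ n, 1 ≤ n → b (n + k) = b n := by
  subst h0
  exact stmt_10_general (by rwa [Rat.isSquare_intCast_iff, IsSquare, exists_congr fun _ => eq_comm])
    (by rw [hsq, Rat.cast_intCast]) hval halg hper
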